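/- arXiv:2602.20492 — 2 statements merged into one kernel-verified Lean document; each statement's English description precedes it below -/
import Mathlib

section
/- Let T be a finite index set, let m ∉ T, and let s be a real-valued function on T ∪ {m} with 0 ≤ s_j ≤ 1 for all j. Define, for any finite set J, S(J) = 1 − ∏_{j ∈ J}(1 − s_j) − ∑_{j ∈ J} s_j · ∏_{z ∈ J, z ≠ j}(1 − s_z). Then S(T ∪ {m}) ≥ S(T); that is, the parameter collision rate does not decrease when an additional device is added to the aggregation set. -/
/-- The parameter collision rate of a finite aggregation set `J` of devices with sparsity
rates `s_j ∈ [0,1]`: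
`S(J) = 1 − ∏_{j ∈ J} (1 − s_j) − ∑_{j ∈ J} s_j ∏_{z ∈ J, z ≠ j} (1 − s_z)`. -/
def collisionRate {ι : Type*} [DecidableEq ι] (s : ι → ℝ) (J : Finset ι) : ℝ :=
  1 - ∏ j ∈ J, (1 - s j) - ∑ j ∈ J, s j * ∏ z ∈ J.erase j, (1 - s z)

/-- Adding an additional device `m ∉ T` (with sparsity rate `s m ∈ [0,1]`) to an
aggregation set `T` does not decrease the parameter collision rate: `S(T ∪ {m}) ≥ S(T)`. -/
theorem collisionRate_mono_insert
    {ι : Type*} [DecidableEq ι] (T : Finset ι) (m : ι) (hm : m ∉ T)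
    (s : ι → ℝ) (hs : ∀ j ∈ insert m T, 0 ≤ s j ∧ s j ≤ 1) :
    collisionRate s T ≤ collisionRate s (insert m T) := by
  have hsum : ∑ j ∈ T, s j * ∏ z ∈ (insert m T).erase j, (1 - s z)
      = (1 - s m) * ∑ j ∈ T, s j * ∏ z ∈ T.erase j, (1 - s z) := by
    rw [Finset.mul_sum]
    refine Finset.sum_congr rfl fun j hj => ?_
    have hne : m ≠ j := fun h => hm (h ▸ hj)
    rw [Finset.erase_insert_of_ne hne,
      Finset.prod_insert (fun h => hm (Finset.mem_of_mem_erase h))]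
    ring
  have hnn : 0 ≤ ∑ j ∈ T, s j * ∏ z ∈ T.erase j, (1 - s z) := by
    refine Finset.sum_nonneg fun j hj =>
      mul_nonneg (hs j (Finset.mem_insert_of_mem hj)).1 (Finset.prod_nonneg fun z hz => ?_)
    have := (hs z (Finset.mem_insert_of_mem (Finset.mem_of_mem_erase hz))).2
    linarith
  have ha := (hs m (Finset.mem_insert_self m T)).1
  unfold collisionRate
  rw [Finset.prod_insert hm, Finset.sum_insert hm, Finset.erase_insert hm, hsum]
  linarith [mul_nonneg ha hnn]
end

section
/- Let J be a nonempty finite index set and let s, s' : J → ℝ satisfy 0 ≤ s_j ≤ s'_j ≤ 1 for all j ∈ J. Define S(s) = 1 − ∏_{j ∈ J}(1 − s_j) − ∑_{j ∈ J} s_j · ∏_{z ∈ J, z ≠ j}(1 − s_z). Then S(s) ≤ S(s'); that is, the parameter collision rate is monotone nondecreasing in each device's sparsity rate. -/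
theorem exactly_one_insert {J : Type*} [DecidableEq J] (s : J → ℝ) (a : J) (T : Finset J)
    (ha : a ∉ T) :
    ∑ j ∈ insert a T, s j * ∏ z ∈ (insert a T).erase j, (1 - s z) =
      s a * ∏ z ∈ T, (1 - s z) +
        (1 - s a) * ∑ j ∈ T, s j * ∏ z ∈ T.erase j, (1 - s z) := by
  rw [Finset.sum_insert ha, Finset.erase_insert ha, Finset.mul_sum]
  congr 1
  refine Finset.sum_congr rfl fun j hj => ?_
  have hne : a ≠ j := fun h => ha (h ▸ hj)
  rw [Finset.erase_insert_of_ne hne,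
    Finset.prod_insert (fun h => ha (Finset.mem_of_mem_erase h))]
  ring

theorem collision_aux {J : Type*} [DecidableEq J]
    (s s' : J → ℝ) (hs : ∀ j, 0 ≤ s j ∧ s j ≤ s' j ∧ s' j ≤ 1) (T : Finset J) :
    ∏ j ∈ T, (1 - s' j) + ∑ j ∈ T, s' j * ∏ z ∈ T.erase j, (1 - s' z) ≤
    ∏ j ∈ T, (1 - s j) + ∑ j ∈ T, s j * ∏ z ∈ T.erase j, (1 - s z) := by
  induction T using Finset.induction_on with
  | empty => simp
  | insert a T ha ih =>
    have hP : ∏ j ∈ T, (1 - s' j) ≤ ∏ j ∈ T, (1 - s j) :=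
      Finset.prod_le_prod (fun j _ => by linarith [(hs j).2.2])
        (fun j _ => by linarith [(hs j).2.1])
    have hQ : 0 ≤ ∑ j ∈ T, s j * ∏ z ∈ T.erase j, (1 - s z) :=
      Finset.sum_nonneg fun j _ => mul_nonneg (hs j).1
        (Finset.prod_nonneg fun z _ => by linarith [(hs z).2.1, (hs z).2.2])
    rw [exactly_one_insert s a T ha, exactly_one_insert s' a T ha,
      Finset.prod_insert ha, Finset.prod_insert ha]
    obtain ⟨h0, h1, h2⟩ := hs a
    have e1 := mul_le_mul_of_nonneg_left hP (h0.trans h1)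
    have e2 := mul_le_mul_of_nonneg_left ih (sub_nonneg.2 h2)
    have e3 := mul_nonneg (sub_nonneg.2 h1) hQ
    linarith

/-- The parameter collision rate
`S(s) = 1 − ∏_j (1 − s_j) − ∑_j s_j ∏_{z ≠ j} (1 − s_z)` over a nonempty finite index set
`J` is monotone nondecreasing in each device's sparsity rate: if `0 ≤ s_j ≤ s'_j ≤ 1` for
all `j ∈ J`, then `S(s) ≤ S(s')`. -/
theorem collision_rate_mono_in_sparsity
    {J : Type*} [Fintype J] [Nonempty J] [DecidableEq J]
    (s s' : J → ℝ) (hs : ∀ j, 0 ≤ s j ∧ s j ≤ s' j ∧ s' j ≤ 1) :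
    (1 - ∏ j, (1 - s j) - ∑ j, s j * ∏ z ∈ Finset.univ.erase j, (1 - s z)) ≤
    (1 - ∏ j, (1 - s' j) - ∑ j, s' j * ∏ z ∈ Finset.univ.erase j, (1 - s' z)) := by
  have h := collision_aux s s' hs Finset.univ
  linarith
end
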